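/- Let H = ⊕_{k≥0} H_k be a graded Hopf algebra over K, i.e. H_k H_l ⊆ H_{k+l} and Δ(H_k) ⊆ ⊕_{r=0}^{k} H_r ⊗ H_{k-r} for all k, l ≥ 0. Then H₀ with the induced operations is a Hopf algebra, and, denoting by i : H₀ → H the inclusion and by π : H → H₀ the projection onto the degree-0 component (which vanishes on H_k for k > 0), the map Π(h) = ∑ h₍₁₎ · i(S₀(π(h₍₂₎))), where S₀ is the antipode of H₀, is an idempotent Rota-Baxter operator of weight -1 on H. -/

import Mathlib

/-!
STATEMENT 9: Let `H = ⊕_{k≥0} H_k` be a graded Hopf algebra. Then `H₀` with the induced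
operations is a Hopf algebra (we express this by: `1 ∈ H₀`, `Δ(H₀) ⊆ H₀ ⊗ H₀`, and there
is an antipode `S₀` for `H₀`), and for the projection `π` onto `H₀` (vanishing on `H_k`,
`k > 0`) and any such antipode `S₀`, the map `Π(h) = ∑ h₍₁₎ i(S₀(π(h₍₂₎)))` is an
idempotent Rota-Baxter operator of weight `-1` on `H`.  All maps are expressed inside `H`
(the inclusion `i : H₀ → H` being implicit), and the antipode property of `S₀` is stated
via the comultiplication and counit of `H` restricted to `H₀`.
-/

open TensorProduct Coalgebra HopfAlgebra LinearMap

/-!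
The projection `p` onto `H₀` is an idempotent bialgebra endomorphism of `H`. Uniqueness of
convolution inverses gives `S₀ ∘ π = p ∘ S`, so `Π = id ⋆ (p ∘ S)` is Radford's projection attached
to `p`. It is characterised by `Π ⋆ p = id`; applying the algebra homomorphism `ρ = (id ⊗ p) ∘ Δ`
to this identity and cancelling the convolution unit `ρ ∘ p` shows that `Π` takes its values in the
coinvariants of `ρ`. Together with `Π (x y) = ∑ x₍₁₎ Π(y) p(S x₍₂₎)` this yields
`Π (Π x · y) = Π x · Π y` and `Π (x · Π y) = Π (x y)`, from which both claims follow.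
-/

open WithConv DirectSum

section Convolution

variable {R A B C : Type*} [CommSemiring R] [Semiring A] [Algebra R A] [Semiring B] [Algebra R B]
  [AddCommMonoid C] [Module R C] [Coalgebra R C]

/-- Postcomposition with an algebra homomorphism `φ : A → B`, as a homomorphism between the
convolution monoids `Hom(C, A)` and `Hom(C, B)`. -/
def convPostcomp (φ : A →ₐ[R] B) : WithConv (C →ₗ[R] A) →* WithConv (C →ₗ[R] B) where
  toFun f := toConv (φ.toLinearMap ∘ₗ f.ofConv)
  map_one' := by ext; simp
  map_mul' f g := congrArg toConv (algHom_comp_convMul_distrib φ f g)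

theorem convPostcomp_includeLeft_mul_includeRight (f : C →ₗ[R] A) (g : C →ₗ[R] B) :
    convPostcomp Algebra.TensorProduct.includeLeft (toConv f) *
        convPostcomp Algebra.TensorProduct.includeRight (toConv g) =
      toConv (TensorProduct.map f g ∘ₗ comul) := by
  ext x
  simp [convPostcomp, (ℛ R x).convMul_apply, ← (ℛ R x).eq]

end Convolution

section BialgHom

variable {R A B : Type*} [CommSemiring R] [Semiring A] [HopfAlgebra R A]

theorem bialgHom_convMul_comp_antipode [Semiring B] [Bialgebra R B] (p : A →ₐc[R] B) :
    toConv (p : A →ₗ[R] B) * toConv ((p : A →ₗ[R] B) ∘ₗ antipode R) = 1 := by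
  have h := congrArg (convPostcomp (p : A →ₐ[R] B)) (id_mul_antipode (R := R) (C := A))
  rwa [map_mul, map_one] at h

theorem comp_antipode_convMul_bialgHom [Semiring B] [Bialgebra R B] (p : A →ₐc[R] B) :
    toConv ((p : A →ₗ[R] B) ∘ₗ antipode R) * toConv (p : A →ₗ[R] B) = 1 := by
  have h := congrArg (convPostcomp (p : A →ₐ[R] B)) (antipode_mul_id (R := R) (C := A))
  rwa [map_mul, map_one] at h

theorem isUnit_toConv_bialgHom [Semiring B] [Bialgebra R B] (p : A →ₐc[R] B) :
    IsUnit (toConv (p : A →ₗ[R] B)) :=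
  ⟨⟨_, _, bialgHom_convMul_comp_antipode p, comp_antipode_convMul_bialgHom p⟩, rfl⟩

theorem comp_bialgHom_eq_comp_antipode [Semiring B] [Bialgebra R B] (p : A →ₐc[R] B)
    {s : B →ₗ[R] B}
    (hs : ∀ x, mul' R B (s.rTensor B (comul (p x))) = algebraMap R B (counit (p x))) :
    s ∘ₗ (p : A →ₗ[R] B) = (p : A →ₗ[R] B) ∘ₗ antipode R := by
  have hleft : toConv (s ∘ₗ (p : A →ₗ[R] B)) * toConv (p : A →ₗ[R] B) = 1 := by
    have hdistrib := convMul_comp_coalgHom_distrib (toConv s) (toConv LinearMap.id) (p : A →ₗc[R] B)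
    refine (congrArg toConv hdistrib).symm.trans ?_
    ext x
    simpa [rTensor] using hs x
  exact toConv_injective (left_inv_eq_right_inv hleft (bialgHom_convMul_comp_antipode p))

theorem map_antipode [Semiring B] [HopfAlgebra R B] (p : A →ₐc[R] B) (x : A) :
    p (antipode R x) = antipode R (p x) :=
  (LinearMap.congr_fun (comp_bialgHom_eq_comp_antipode p
    fun _ => mul_antipode_rTensor_comul_apply _) x).symm

end BialgHom

section RotaBaxter

/-- `P` is a Rota-Baxter operator of weight `c` on the algebra `A`. -/
def IsRotaBaxter {R A : Type*} [CommSemiring R] [Semiring A] [Algebra R A] (c : R)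
    (P : A →ₗ[R] A) : Prop :=
  ∀ x y, P x * P y = P (x * P y) + P (P x * y) + c • P (x * y)

theorem isRotaBaxter_neg_one_of_map_mul_map {R A : Type*} [CommRing R] [Ring A] [Algebra R A]
    {P : A →ₗ[R] A} (hleft : ∀ x y, P (P x * y) = P x * P y)
    (hright : ∀ x y, P (x * P y) = P (x * y)) : IsRotaBaxter (-1 : R) P := by
  intro x y
  rw [hleft, hright, neg_one_smul]
  abel

end RotaBaxter

section CoinvariantProj

/-- The convolution product `id ⋆ (p ∘ S)`, that is `h ↦ ∑ h₍₁₎ p(S h₍₂₎)`. For an idempotent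
bialgebra endomorphism `p` this is Radford's projection of `H` onto the right coinvariants of
`(id ⊗ p) ∘ Δ`. -/
def coinvariantProj {R H : Type*} [CommSemiring R] [Semiring H] [HopfAlgebra R H]
    (p : H →ₐc[R] H) : H →ₗ[R] H :=
  mul' R H ∘ₗ ((p : H →ₗ[R] H) ∘ₗ antipode R).lTensor H ∘ₗ comul

variable {R H : Type*} [CommSemiring R] [Semiring H] [HopfAlgebra R H] (p : H →ₐc[R] H)

theorem coinvariantProj_convMul_bialgHom :
    toConv (coinvariantProj p) * toConv (p : H →ₗ[R] H) = toConv LinearMap.id :=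
  calc toConv (coinvariantProj p) * toConv (p : H →ₗ[R] H)
      = toConv LinearMap.id * toConv ((p : H →ₗ[R] H) ∘ₗ antipode R) *
          toConv (p : H →ₗ[R] H) := rfl
    _ = toConv LinearMap.id := by rw [mul_assoc, comp_antipode_convMul_bialgHom, mul_one]

theorem coinvariantProj_one : coinvariantProj p 1 = 1 := by
  simp [coinvariantProj, Algebra.TensorProduct.one_def]

theorem coinvariantProj_mul (x y : H) :
    coinvariantProj p (x * y) =
      mul' R H (TensorProduct.map (mulRight R (coinvariantProj p y))
        ((p : H →ₗ[R] H) ∘ₗ antipode R) (comul x)) := by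
  simp only [coinvariantProj, comp_apply, Bialgebra.comul_mul, ← (ℛ R x).eq, ← (ℛ R y).eq]
  simpa [antipode_mul_antidistrib, Finset.mul_sum, Finset.sum_mul, mul_assoc] using Finset.sum_comm

variable {p}

theorem map_id_comul_coinvariantProj (hp : ∀ x, p (p x) = p x) (x : H) :
    TensorProduct.map LinearMap.id (p : H →ₗ[R] H) (comul (coinvariantProj p x)) =
      coinvariantProj p x ⊗ₜ[R] 1 := by
  let ρ : H →ₐ[R] H ⊗[R] H :=
    (Algebra.TensorProduct.map (AlgHom.id R H) (p : H →ₐ[R] H)).comp (Bialgebra.comulAlgHom R H)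
  let ι₁ : H →ₐ[R] H ⊗[R] H := Algebra.TensorProduct.includeLeft
  let ι₂ : H →ₐ[R] H ⊗[R] H := Algebra.TensorProduct.includeRight
  let P := toConv (coinvariantProj p)
  let π := toConv (p : H →ₗ[R] H)
  have hPπ : P * π = toConv LinearMap.id := coinvariantProj_convMul_bialgHom p
  have hρ : convPostcomp ρ (toConv LinearMap.id) =
      convPostcomp ι₁ (toConv LinearMap.id) * convPostcomp ι₂ π :=
    (convPostcomp_includeLeft_mul_includeRight _ _).symm
  have hρπ : convPostcomp ρ π = convPostcomp ι₁ π * convPostcomp ι₂ π := by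
    refine Eq.trans ?_ (convPostcomp_includeLeft_mul_includeRight _ _).symm
    ext y
    simp [convPostcomp, ρ, π, ← CoalgHomClass.map_comp_comul_apply, ← (ℛ R y).eq, hp]
  have hcancel : convPostcomp ρ P * convPostcomp ρ π = convPostcomp ι₁ P * convPostcomp ρ π := by
    rw [← map_mul, hPπ, hρ, ← hPπ, map_mul, hρπ, mul_assoc]
  have hP : convPostcomp ρ P = convPostcomp ι₁ P :=
    ((isUnit_toConv_bialgHom p).map (convPostcomp ρ)).mul_right_cancel hcancel
  exact LinearMap.congr_fun (congrArg ofConv hP) x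

theorem coinvariantProj_mul_of_coinvariantProj_left (hp : ∀ x, p (p x) = p x) (x y : H) :
    coinvariantProj p (coinvariantProj p x * y) = coinvariantProj p x * coinvariantProj p y := by
  have habsorb : ((p : H →ₗ[R] H) ∘ₗ antipode R) ∘ₗ (p : H →ₗ[R] H) =
      (p : H →ₗ[R] H) ∘ₗ antipode R := by
    ext z
    simp [← map_antipode, hp]
  rw [coinvariantProj_mul, ← habsorb, ← LinearMap.comp_id (mulRight R (coinvariantProj p y)),
    TensorProduct.map_comp, LinearMap.comp_apply, map_id_comul_coinvariantProj hp]
  simp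

theorem coinvariantProj_coinvariantProj (hp : ∀ x, p (p x) = p x) (x : H) :
    coinvariantProj p (coinvariantProj p x) = coinvariantProj p x := by
  simpa [coinvariantProj_one] using coinvariantProj_mul_of_coinvariantProj_left hp x 1

theorem coinvariantProj_mul_of_coinvariantProj_right (hp : ∀ x, p (p x) = p x) (x y : H) :
    coinvariantProj p (x * coinvariantProj p y) = coinvariantProj p (x * y) := by
  rw [coinvariantProj_mul, coinvariantProj_coinvariantProj hp, ← coinvariantProj_mul]

theorem isRotaBaxter_coinvariantProj {R H : Type*} [CommRing R] [Ring H] [HopfAlgebra R H]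
    {p : H →ₐc[R] H} (hp : ∀ x, p (p x) = p x) : IsRotaBaxter (-1 : R) (coinvariantProj p) :=
  isRotaBaxter_neg_one_of_map_mul_map (coinvariantProj_mul_of_coinvariantProj_left hp)
    (coinvariantProj_mul_of_coinvariantProj_right hp)

end CoinvariantProj

section Grading

theorem one_mem_zero_of_gradedMul {ι σ A : Type*} [DecidableEq ι] [AddMonoid ι]
    [IsRightCancelAdd ι] [NonAssocSemiring A] [SetLike σ A] [AddSubmonoidClass σ A] (𝒜 : ι → σ)
    [Decomposition 𝒜] [SetLike.GradedMul 𝒜] : (1 : A) ∈ 𝒜 0 := by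
  have hdecompose {j : ι} (b : 𝒜 j) (a : A) :
      (decompose 𝒜 (a * b) j : A) = decompose 𝒜 a 0 * b := by
    induction a using Decomposition.inductionOn 𝒜 with
    | zero => simp
    | @homogeneous i a =>
      have hab : (a * b : A) ∈ 𝒜 (i + j) := SetLike.mul_mem_graded a.2 b.2
      rcases eq_or_ne i 0 with rfl | hi
      · rw [zero_add] at hab
        rw [decompose_of_mem_same 𝒜 hab, decompose_of_mem_same 𝒜 a.2]
      · rw [decompose_of_mem_ne 𝒜 hab (by simpa using hi), decompose_of_mem_ne 𝒜 a.2 hi, zero_mul]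
    | add a a' ha ha' => simp [add_mul, ha, ha']
  have hone (b : A) : (decompose 𝒜 (1 : A) 0 : A) * b = b := by
    induction b using Decomposition.inductionOn 𝒜 with
    | zero => simp
    | homogeneous b => rw [← hdecompose, one_mul, decompose_of_mem_same 𝒜 b.2]
    | add b b' hb hb' => rw [mul_add, hb, hb']
  rw [← hone 1, mul_one]
  exact SetLike.coe_mem _

section Projection

variable {ι R C : Type*} [DecidableEq ι] [Semiring R] [AddCommMonoid C] [Module R C]
  (𝒞 : ι → Submodule R C) [Decomposition 𝒞]

/-- The projection of `C` onto its homogeneous component of degree `i`, regarded as an endomorphism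
of `C`. Unlike `GradedAlgebra.proj` it does not require a multiplication. -/
def homogeneousProj (i : ι) : C →ₗ[R] C :=
  (𝒞 i).subtype ∘ₗ DirectSum.component R ι (fun i => 𝒞 i) i ∘ₗ
    (decomposeLinearEquiv 𝒞).toLinearMap

theorem homogeneousProj_mem (i : ι) (x : C) : homogeneousProj 𝒞 i x ∈ 𝒞 i :=
  SetLike.coe_mem (decompose 𝒞 x i)

theorem homogeneousProj_of_mem {i : ι} {x : C} (hx : x ∈ 𝒞 i) : homogeneousProj 𝒞 i x = x :=
  decompose_of_mem_same 𝒞 hx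

theorem homogeneousProj_of_mem_ne {i j : ι} {x : C} (hx : x ∈ 𝒞 i) (hij : i ≠ j) :
    homogeneousProj 𝒞 j x = 0 :=
  decompose_of_mem_ne 𝒞 hx hij

theorem eq_homogeneousProj {i : ι} {π : C →ₗ[R] C} (hsame : ∀ x ∈ 𝒞 i, π x = x)
    (hne : ∀ j ≠ i, ∀ x ∈ 𝒞 j, π x = 0) : π = homogeneousProj 𝒞 i := by
  refine decompose_lhom_ext 𝒞 fun j => LinearMap.ext fun ⟨x, hx⟩ => ?_
  rcases eq_or_ne j i with rfl | hj
  · exact (hsame x hx).trans (homogeneousProj_of_mem 𝒞 hx).symm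
  · exact (hne j hj x hx).trans (homogeneousProj_of_mem_ne 𝒞 hx hj).symm

end Projection

section GradedComul

variable {R C : Type*} [CommSemiring R] [AddCommMonoid C] [Module R C] [Coalgebra R C]

/-- The condition `Δ(C_k) ⊆ ⊕_{r ≤ k} C_r ⊗ C_{k-r}` on a grading of a coalgebra. -/
def IsGradedComul (𝒞 : ℕ → Submodule R C) : Prop :=
  ∀ k, ∀ x ∈ 𝒞 k, comul (R := R) x ∈
    ⨆ r ∈ Finset.range (k + 1), range (TensorProduct.mapIncl (𝒞 r) (𝒞 (k - r)))

namespace IsGradedComul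

variable {𝒞 : ℕ → Submodule R C}

theorem comul_mem_zero (h𝒞 : IsGradedComul 𝒞) {x : C} (hx : x ∈ 𝒞 0) :
    comul (R := R) x ∈ range (TensorProduct.mapIncl (𝒞 0) (𝒞 0)) := by
  simpa using h𝒞 0 x hx

theorem apply_comul_eq {M : Type*} [AddCommMonoid M] [Module R M]
    (h𝒞 : IsGradedComul 𝒞) {F G : C ⊗[R] C →ₗ[R] M} {k : ℕ}
    (hFG : ∀ r ≤ k, ∀ a ∈ 𝒞 r, ∀ b ∈ 𝒞 (k - r), F (a ⊗ₜ b) = G (a ⊗ₜ b)) {x : C} (hx : x ∈ 𝒞 k) :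
    F (comul x) = G (comul x) := by
  suffices hle : ⨆ r ∈ Finset.range (k + 1), range (TensorProduct.mapIncl (𝒞 r) (𝒞 (k - r))) ≤
      eqLocus F G from hle (h𝒞 k x hx)
  refine iSup₂_le fun r hr => range_le_iff_comap.2 ?_
  rw [Submodule.eq_top_iff']
  intro t
  induction t with
  | zero => simp
  | add t t' ht ht' => exact add_mem ht ht'
  | tmul a b => exact hFG r (Finset.mem_range_succ_iff.1 hr) a a.2 b b.2

variable [Decomposition 𝒞]

theorem map_homogeneousProj_zero_comp_comul (h𝒞 : IsGradedComul 𝒞) :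
    TensorProduct.map (homogeneousProj 𝒞 0) (homogeneousProj 𝒞 0) ∘ₗ comul =
      comul ∘ₗ homogeneousProj 𝒞 0 := by
  refine decompose_lhom_ext 𝒞 fun k => LinearMap.ext fun ⟨x, hx⟩ => ?_
  simp only [comp_apply, Submodule.subtype_apply]
  rcases k.eq_zero_or_pos with rfl | hk
  · rw [homogeneousProj_of_mem 𝒞 hx]
    refine h𝒞.apply_comul_eq (G := LinearMap.id) (fun r hr a ha b hb => ?_) hx
    obtain rfl : r = 0 := Nat.le_zero.1 hr
    simp [homogeneousProj_of_mem 𝒞 ha, homogeneousProj_of_mem 𝒞 hb]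
  · rw [homogeneousProj_of_mem_ne 𝒞 hx hk.ne', map_zero]
    refine h𝒞.apply_comul_eq (G := 0) (fun r hr a ha b hb => ?_) hx
    rcases r.eq_zero_or_pos with rfl | hr
    · simp [homogeneousProj_of_mem_ne 𝒞 hb hk.ne']
    · simp [homogeneousProj_of_mem_ne 𝒞 ha hr.ne']

theorem rTensor_counit_homogeneousProj_zero_comul (h𝒞 : IsGradedComul 𝒞) (x : C) :
    TensorProduct.lid R C ((counit ∘ₗ homogeneousProj 𝒞 0).rTensor C (comul x)) = x := by
  suffices h : (TensorProduct.lid R C).toLinearMap ∘ₗ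
      (counit ∘ₗ homogeneousProj 𝒞 0).rTensor C ∘ₗ comul = LinearMap.id from
    LinearMap.congr_fun h x
  refine decompose_lhom_ext 𝒞 fun k => LinearMap.ext fun ⟨y, hy⟩ => ?_
  have hcomponent := h𝒞.apply_comul_eq
    (F := (TensorProduct.lid R C).toLinearMap ∘ₗ (counit ∘ₗ homogeneousProj 𝒞 0).rTensor C)
    (G := homogeneousProj 𝒞 k ∘ₗ (TensorProduct.lid R C).toLinearMap ∘ₗ counit.rTensor C)
    (fun r hr a ha b hb => by
      rcases r.eq_zero_or_pos with rfl | hr'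
      · simp [homogeneousProj_of_mem 𝒞 ha, homogeneousProj_of_mem 𝒞 (i := k) hb]
      · simp [homogeneousProj_of_mem_ne 𝒞 ha hr'.ne',
          homogeneousProj_of_mem_ne 𝒞 hb (show k - r ≠ k by omega)]) hy
  simpa [homogeneousProj_of_mem 𝒞 hy] using hcomponent

theorem counit_comp_homogeneousProj_zero (h𝒞 : IsGradedComul 𝒞) :
    counit ∘ₗ homogeneousProj 𝒞 0 = counit (R := R) (A := C) := by
  -- `ε ∘ π₀` is a left counit, and `ε` is a right one.
  have hone : (1 : WithConv (C →ₗ[R] R)) = toConv counit := rfl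
  ext x
  calc counit (homogeneousProj 𝒞 0 x)
      = (toConv (counit ∘ₗ homogeneousProj 𝒞 0) * toConv counit : WithConv (C →ₗ[R] R)) x := by
        rw [← hone, mul_one, comp_apply]
    _ = counit (TensorProduct.lid R C
          ((counit ∘ₗ homogeneousProj 𝒞 0).rTensor C (comul x))) := by
        simp [(ℛ R x).convMul_apply, ← (ℛ R x).eq]
    _ = counit x := by rw [h𝒞.rTensor_counit_homogeneousProj_zero_comul]

end IsGradedComul

end GradedComul

end Grading

section GradedBialgebra

variable {R A : Type*} [CommSemiring R] [Semiring A]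

/-- The projection of a graded bialgebra onto its degree-zero component, as a bialgebra
endomorphism. -/
def projZeroBialgHom [Bialgebra R A] (𝒜 : ℕ → Submodule R A) [GradedAlgebra 𝒜]
    (h𝒜 : IsGradedComul 𝒜) : A →ₐc[R] A :=
  .ofAlgHom
    (.ofLinearMap (homogeneousProj 𝒜 0) (map_one (GradedRing.projZeroRingHom 𝒜))
      (map_mul (GradedRing.projZeroRingHom 𝒜)))
    (AlgHom.toLinearMap_injective h𝒜.counit_comp_homogeneousProj_zero)
    (AlgHom.toLinearMap_injective h𝒜.map_homogeneousProj_zero_comp_comul)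

theorem projZeroBialgHom_of_mem [Bialgebra R A] {𝒜 : ℕ → Submodule R A} [GradedAlgebra 𝒜]
    (h𝒜 : IsGradedComul 𝒜) {x : A} (hx : x ∈ 𝒜 0) : projZeroBialgHom 𝒜 h𝒜 x = x :=
  homogeneousProj_of_mem 𝒜 hx

theorem projZeroBialgHom_mem [Bialgebra R A] {𝒜 : ℕ → Submodule R A} [GradedAlgebra 𝒜]
    (h𝒜 : IsGradedComul 𝒜) (x : A) : projZeroBialgHom 𝒜 h𝒜 x ∈ 𝒜 0 :=
  homogeneousProj_mem 𝒜 0 x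

theorem mul'_rTensor_projZero_antipode_comul [HopfAlgebra R A] {𝒜 : ℕ → Submodule R A}
    [GradedAlgebra 𝒜] (h𝒜 : IsGradedComul 𝒜) {x : A} (hx : x ∈ 𝒜 0) :
    mul' R A ((homogeneousProj 𝒜 0 ∘ₗ antipode R).rTensor A (comul x)) =
      algebraMap R A (counit x) := by
  have hinv := comp_antipode_convMul_bialgHom (projZeroBialgHom 𝒜 h𝒜)
  refine Eq.trans ?_ (LinearMap.congr_fun (congrArg ofConv hinv) x)
  refine h𝒜.apply_comul_eq (F := mul' R A ∘ₗ (homogeneousProj 𝒜 0 ∘ₗ antipode R).rTensor A)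
    (G := mul' R A ∘ₗ TensorProduct.map (homogeneousProj 𝒜 0 ∘ₗ antipode R) (homogeneousProj 𝒜 0))
    (fun r _ a _ b hb => ?_) hx
  simp [homogeneousProj_of_mem 𝒜 (i := 0) (by simpa using hb)]

theorem mul'_lTensor_projZero_antipode_comul [HopfAlgebra R A] {𝒜 : ℕ → Submodule R A}
    [GradedAlgebra 𝒜] (h𝒜 : IsGradedComul 𝒜) {x : A} (hx : x ∈ 𝒜 0) :
    mul' R A ((homogeneousProj 𝒜 0 ∘ₗ antipode R).lTensor A (comul x)) =
      algebraMap R A (counit x) := by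
  have hinv := bialgHom_convMul_comp_antipode (projZeroBialgHom 𝒜 h𝒜)
  refine Eq.trans ?_ (LinearMap.congr_fun (congrArg ofConv hinv) x)
  refine h𝒜.apply_comul_eq (F := mul' R A ∘ₗ (homogeneousProj 𝒜 0 ∘ₗ antipode R).lTensor A)
    (G := mul' R A ∘ₗ TensorProduct.map (homogeneousProj 𝒜 0) (homogeneousProj 𝒜 0 ∘ₗ antipode R))
    (fun r hr a ha b hb => ?_) hx
  obtain rfl : r = 0 := Nat.le_zero.1 hr
  simp [homogeneousProj_of_mem 𝒜 ha]

end GradedBialgebra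

theorem gradedHopfAlgebra_degreeZero_projection_isRotaBaxter_general
    {K H : Type*} [CommRing K] [Ring H] [HopfAlgebra K H] (ℋ : ℕ → Submodule K H)
    (hinternal : DirectSum.IsInternal ℋ)
    (hmul : ∀ k l : ℕ, ∀ x ∈ ℋ k, ∀ y ∈ ℋ l, x * y ∈ ℋ (k + l)) (hcomul : IsGradedComul ℋ) :
    (1 : H) ∈ ℋ 0 ∧
    (∀ x ∈ ℋ 0, comul (R := K) x ∈ range (TensorProduct.mapIncl (ℋ 0) (ℋ 0))) ∧
    (∃ S₀ : H →ₗ[K] H, (∀ x ∈ ℋ 0, S₀ x ∈ ℋ 0) ∧ ∀ x ∈ ℋ 0,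
      mul' K H (S₀.rTensor H (comul x)) = algebraMap K H (counit x) ∧
      mul' K H (S₀.lTensor H (comul x)) = algebraMap K H (counit x)) ∧
    ∀ π : H →ₗ[K] H, (∀ x ∈ ℋ 0, π x = x) → (∀ k, 0 < k → ∀ x ∈ ℋ k, π x = 0) →
      ∀ S₀ : H →ₗ[K] H,
        (∀ x ∈ ℋ 0, mul' K H (S₀.rTensor H (comul x)) = algebraMap K H (counit x)) →
        let P : H →ₗ[K] H := mul' K H ∘ₗ (S₀ ∘ₗ π).lTensor H ∘ₗ comul
        P ∘ₗ P = P ∧ IsRotaBaxter (-1 : K) P := by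
  let _ : Decomposition ℋ := hinternal.chooseDecomposition
  have _ : SetLike.GradedMul ℋ := ⟨fun {k l x y} hx hy => hmul k l x hx y hy⟩
  have hone : (1 : H) ∈ ℋ 0 := one_mem_zero_of_gradedMul ℋ
  let _ : GradedAlgebra ℋ := { one_mem := hone }
  let p := projZeroBialgHom ℋ hcomul
  have hp (x : H) : p (p x) = p x :=
    projZeroBialgHom_of_mem hcomul (projZeroBialgHom_mem hcomul x)
  refine ⟨hone, fun x hx => hcomul.comul_mem_zero hx,
    ⟨homogeneousProj ℋ 0 ∘ₗ antipode K, fun x _ => homogeneousProj_mem ℋ 0 _, fun x hx =>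
      ⟨mul'_rTensor_projZero_antipode_comul hcomul hx,
        mul'_lTensor_projZero_antipode_comul hcomul hx⟩⟩, ?_⟩
  intro π hzero hpos S₀ hS₀
  have hS₀π : S₀ ∘ₗ π = (p : H →ₗ[K] H) ∘ₗ antipode K := by
    rw [eq_homogeneousProj ℋ hzero fun k hk => hpos k (Nat.pos_of_ne_zero hk)]
    exact comp_bialgHom_eq_comp_antipode p fun x => hS₀ _ (projZeroBialgHom_mem hcomul x)
  rw [hS₀π]
  exact ⟨LinearMap.ext (coinvariantProj_coinvariantProj hp), isRotaBaxter_coinvariantProj hp⟩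

theorem gradedHopfAlgebra_degreeZero_projection_isRotaBaxter
    (K : Type*) [Field K] [CharZero K]
    (H : Type*) [Ring H] [HopfAlgebra K H]
    (ℋ : ℕ → Submodule K H)
    -- H = ⊕_{k ≥ 0} H_k as K-vector spaces
    (hinternal : DirectSum.IsInternal ℋ)
    -- H_k H_l ⊆ H_{k+l}
    (hmul : ∀ k l : ℕ, ∀ x ∈ ℋ k, ∀ y ∈ ℋ l, x * y ∈ ℋ (k + l))
    -- Δ(H_k) ⊆ ⊕_{r=0}^{k} H_r ⊗ H_{k-r}
    (hcomul : ∀ k : ℕ, ∀ x ∈ ℋ k,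
      Coalgebra.comul (R := K) x ∈
        ⨆ r ∈ Finset.range (k + 1),
          LinearMap.range (TensorProduct.mapIncl (ℋ r) (ℋ (k - r)))) :
    -- H₀ is a Hopf algebra with the induced operations:
    ((1 : H) ∈ ℋ 0) ∧
    (∀ x ∈ ℋ 0, Coalgebra.comul (R := K) x ∈
        LinearMap.range (TensorProduct.mapIncl (ℋ 0) (ℋ 0))) ∧
    (∃ S₀ : H →ₗ[K] H,
      (∀ x ∈ ℋ 0, S₀ x ∈ ℋ 0) ∧
      (∀ x ∈ ℋ 0,
        LinearMap.mul' K H ((S₀.rTensor H) (Coalgebra.comul x)) =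
          algebraMap K H (Coalgebra.counit x) ∧
        LinearMap.mul' K H ((S₀.lTensor H) (Coalgebra.comul x)) =
          algebraMap K H (Coalgebra.counit x))) ∧
    -- and for the projection π onto H₀ and any antipode S₀ of H₀,
    -- Π = id ⋆ (i ∘ S₀ ∘ π) is an idempotent Rota-Baxter operator of weight -1
    (∀ π : H →ₗ[K] H,
      (∀ x ∈ ℋ 0, π x = x) →
      (∀ k : ℕ, 0 < k → ∀ x ∈ ℋ k, π x = 0) →
      ∀ S₀ : H →ₗ[K] H,
        (∀ x ∈ ℋ 0, S₀ x ∈ ℋ 0) →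
        (∀ x ∈ ℋ 0,
          LinearMap.mul' K H ((S₀.rTensor H) (Coalgebra.comul x)) =
            algebraMap K H (Coalgebra.counit x) ∧
          LinearMap.mul' K H ((S₀.lTensor H) (Coalgebra.comul x)) =
            algebraMap K H (Coalgebra.counit x)) →
        let Pr : H →ₗ[K] H :=
          LinearMap.mul' K H ∘ₗ ((S₀ ∘ₗ π).lTensor H) ∘ₗ Coalgebra.comul
        (Pr ∘ₗ Pr = Pr) ∧
        (∀ x y : H,
          Pr x * Pr y = Pr (x * Pr y) + Pr (Pr x * y) + (-1 : K) • Pr (x * y))) := by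
  obtain ⟨hone, hΔ, hS, hP⟩ :=
    gradedHopfAlgebra_degreeZero_projection_isRotaBaxter_general ℋ hinternal hmul hcomul
  exact ⟨hone, hΔ, hS, fun π hzero hpos S₀ _ hS₀ => hP π hzero hpos S₀ fun x hx => (hS₀ x hx).1⟩
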